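/- If ρ is a separable density matrix on ℂ² ⊗ ℂ², then c² = Σ_{i,j=1}^3 Tr(ρ(σ_i ⊗ σ_j))² ≤ 1. Hence any two-qubit density matrix whose correlation component has squared length greater than 1 is entangled. -/

import Mathlib

open scoped ComplexOrder Kronecker

noncomputable section

/-- A density matrix: positive semidefinite with trace one. -/
def IsDensity {ι : Type*} [Fintype ι] (ρ : Matrix ι ι ℂ) : Prop :=
  ρ.PosSemidef ∧ ρ.trace = 1

/-- A separable state: a finite convex combination of tensor products of density
matrices; a non-separable density matrix is entangled. -/
def Separable {m n : ℕ} (ρ : Matrix (Fin m × Fin n) (Fin m × Fin n) ℂ) : Prop :=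
  ∃ (k : ℕ) (lam : Fin k → ℝ) (ρ1 : Fin k → Matrix (Fin m) (Fin m) ℂ)
    (ρ2 : Fin k → Matrix (Fin n) (Fin n) ℂ),
    (∀ i, 0 ≤ lam i) ∧ (∑ i, lam i = 1) ∧
    (∀ i, IsDensity (ρ1 i)) ∧ (∀ i, IsDensity (ρ2 i)) ∧
    ρ = ∑ i, (lam i : ℂ) • (ρ1 i ⊗ₖ ρ2 i)

/-- The three Pauli matrices `σ₁, σ₂, σ₃`. -/
def pauli : Fin 3 → Matrix (Fin 2) (Fin 2) ℂ :=
  ![!![0, 1; 1, 0], !![0, -Complex.I; Complex.I, 0], !![1, 0; 0, -1]]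

/-- `c² = Σᵢⱼ Tr(ρ(σᵢ ⊗ σⱼ))²`, the squared length of the correlation component. -/
def cSq (ρ : Matrix (Fin 2 × Fin 2) (Fin 2 × Fin 2) ℂ) : ℝ :=
  ∑ i : Fin 3, ∑ j : Fin 3, ((ρ * (pauli i ⊗ₖ pauli j)).trace.re) ^ 2

/-!
A product state has `Tr((ρ ⊗ σ)(A ⊗ B)) = Tr(ρ A) Tr(σ B)`, so its squared correlations factor as
the product of the squared lengths of two local vectors of expectation values. Squared length is
convex, so a bound valid on product states is inherited by their mixtures. For qubits the local
vectors are Bloch vectors, which `∑ᵢ Tr(ρ σᵢ)² = (Tr ρ)² - 4 det ρ ≤ 1` confines to the unit ball.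
-/

/-- The expectation value `Tr(ρ A)` of the observable `A` in the state `ρ`. The real part is taken
so that it is a real number; nothing is lost when `ρ` and `A` are Hermitian. -/
def expVal {ι : Type*} [Fintype ι] (ρ A : Matrix ι ι ℂ) : ℝ :=
  (ρ * A).trace.re

section Expectation

variable {ι ι' κ κ' α : Type*} [Fintype ι] [Fintype ι'] [Fintype κ] [Fintype κ']

lemma coe_expVal {ρ A : Matrix ι ι ℂ} (hρ : ρ.IsHermitian) (hA : A.IsHermitian) :
    (expVal ρ A : ℂ) = (ρ * A).trace := by
  refine Complex.conj_eq_iff_re.mp ?_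
  rw [starRingEnd_apply, ← Matrix.trace_conjTranspose, Matrix.conjTranspose_mul, hρ.eq, hA.eq,
    Matrix.trace_mul_comm]

lemma expVal_sum_smul (s : Finset α) (w : α → ℝ) (ρ : α → Matrix ι ι ℂ) (A : Matrix ι ι ℂ) :
    expVal (∑ x ∈ s, (w x : ℂ) • ρ x) A = ∑ x ∈ s, w x * expVal (ρ x) A := by
  simp only [expVal, Finset.sum_mul, Matrix.smul_mul, Matrix.trace_sum, Matrix.trace_smul,
    Complex.re_sum, smul_eq_mul, Complex.re_ofReal_mul]

lemma expVal_kronecker {ρ A : Matrix ι ι ℂ} (hρ : ρ.IsHermitian) (hA : A.IsHermitian)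
    (σ B : Matrix ι' ι' ℂ) : expVal (ρ ⊗ₖ σ) (A ⊗ₖ B) = expVal ρ A * expVal σ B := by
  rw [expVal, ← Matrix.mul_kronecker_mul, Matrix.trace_kronecker, ← coe_expVal hρ hA,
    Complex.re_ofReal_mul, ← expVal]

lemma sum_sq_expVal_kronecker {ρ : Matrix ι ι ℂ} {A : κ → Matrix ι ι ℂ} (hρ : ρ.IsHermitian)
    (hA : ∀ i, (A i).IsHermitian) (σ : Matrix ι' ι' ℂ) (B : κ' → Matrix ι' ι' ℂ) :
    ∑ p : κ × κ', expVal (ρ ⊗ₖ σ) (A p.1 ⊗ₖ B p.2) ^ 2 =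
      (∑ i, expVal ρ (A i) ^ 2) * ∑ j, expVal σ (B j) ^ 2 := by
  simp only [expVal_kronecker hρ (hA _), mul_pow, Fintype.sum_mul_sum, Fintype.sum_prod_type]

lemma sum_sq_weighted_sum_le {s : Finset α} {w : α → ℝ} {v : α → κ → ℝ} {C : ℝ}
    (hw : ∀ x ∈ s, 0 ≤ w x) (hw_sum : ∑ x ∈ s, w x = 1) (hv : ∀ x ∈ s, ∑ k, v x k ^ 2 ≤ C) :
    ∑ k, (∑ x ∈ s, w x * v x k) ^ 2 ≤ C :=
  calc
    ∑ k, (∑ x ∈ s, w x * v x k) ^ 2 ≤ ∑ k, ∑ x ∈ s, w x * v x k ^ 2 :=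
      Finset.sum_le_sum fun _ _ =>
        Real.pow_arith_mean_le_arith_mean_pow_of_even s w _ hw hw_sum even_two
    _ = ∑ x ∈ s, w x * ∑ k, v x k ^ 2 := by
      simp only [Finset.mul_sum]
      exact Finset.sum_comm
    _ ≤ ∑ x ∈ s, w x * C :=
      Finset.sum_le_sum fun x hx => mul_le_mul_of_nonneg_left (hv x hx) (hw x hx)
    _ = C := by rw [← Finset.sum_mul, hw_sum, one_mul]

lemma Separable.sum_sq_expVal_kronecker_le {m n : ℕ}
    {ρ : Matrix (Fin m × Fin n) (Fin m × Fin n) ℂ} (hρ : Separable ρ)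
    {A : κ → Matrix (Fin m) (Fin m) ℂ} {B : κ' → Matrix (Fin n) (Fin n) ℂ} {a b : ℝ}
    (hA : ∀ i, (A i).IsHermitian)
    (hA_le : ∀ τ, IsDensity τ → ∑ i, expVal τ (A i) ^ 2 ≤ a)
    (hB_le : ∀ τ, IsDensity τ → ∑ j, expVal τ (B j) ^ 2 ≤ b) :
    ∑ p : κ × κ', expVal ρ (A p.1 ⊗ₖ B p.2) ^ 2 ≤ a * b := by
  obtain ⟨k, w, ρ₁, ρ₂, hw, hw_sum, hρ₁, hρ₂, rfl⟩ := hρ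
  simp only [expVal_sum_smul]
  refine sum_sq_weighted_sum_le (fun x _ => hw x) hw_sum fun x _ => ?_
  rw [sum_sq_expVal_kronecker (hρ₁ x).1.isHermitian hA]
  have hA_nonneg : 0 ≤ ∑ i, expVal (ρ₁ x) (A i) ^ 2 := Finset.sum_nonneg fun _ _ => sq_nonneg _
  have hB_nonneg : 0 ≤ ∑ j, expVal (ρ₂ x) (B j) ^ 2 := Finset.sum_nonneg fun _ _ => sq_nonneg _
  exact mul_le_mul (hA_le _ (hρ₁ x)) (hB_le _ (hρ₂ x)) hB_nonneg
    (hA_nonneg.trans (hA_le _ (hρ₁ x)))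

end Expectation

lemma isHermitian_pauli (i : Fin 3) : (pauli i).IsHermitian := by
  ext j k
  fin_cases i <;> fin_cases j <;> fin_cases k <;> simp [pauli]

lemma sum_sq_trace_mul_pauli (A : Matrix (Fin 2) (Fin 2) ℂ) :
    ∑ i, (A * pauli i).trace ^ 2 = A.trace ^ 2 - 4 * A.det := by
  have h₁ : (A * pauli 0).trace = A 0 1 + A 1 0 := by
    simp [pauli, Matrix.trace_fin_two, Matrix.mul_apply]
  have h₂ : (A * pauli 1).trace = A 0 1 * Complex.I - A 1 0 * Complex.I := by
    simp [pauli, Matrix.trace_fin_two, Matrix.mul_apply, sub_eq_add_neg]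
  have h₃ : (A * pauli 2).trace = A 0 0 - A 1 1 := by
    simp [pauli, Matrix.trace_fin_two, Matrix.mul_apply, sub_eq_add_neg]
  rw [Fin.sum_univ_three, h₁, h₂, h₃, Matrix.trace_fin_two, Matrix.det_fin_two]
  linear_combination (A 0 1 - A 1 0) ^ 2 * Complex.I_sq

lemma IsDensity.sum_sq_expVal_pauli_le_one {ρ : Matrix (Fin 2) (Fin 2) ℂ} (hρ : IsDensity ρ) :
    ∑ i, expVal ρ (pauli i) ^ 2 ≤ 1 := by
  have h_sum : ((∑ i, expVal ρ (pauli i) ^ 2 : ℝ) : ℂ) = 1 - 4 * ρ.det := by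
    push_cast
    simp only [coe_expVal hρ.1.isHermitian (isHermitian_pauli _), sum_sq_trace_mul_pauli, hρ.2,
      one_pow]
  have h_det : 0 ≤ 4 * ρ.det := mul_nonneg zero_le_four hρ.1.det_nonneg
  exact_mod_cast h_sum.trans_le (sub_le_self 1 h_det)

lemma cSq_eq_sum_sq_expVal (ρ : Matrix (Fin 2 × Fin 2) (Fin 2 × Fin 2) ℂ) :
    cSq ρ = ∑ p : Fin 3 × Fin 3, expVal ρ (pauli p.1 ⊗ₖ pauli p.2) ^ 2 := by
  rw [Fintype.sum_prod_type]
  rfl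

lemma Separable.cSq_le_one {ρ : Matrix (Fin 2 × Fin 2) (Fin 2 × Fin 2) ℂ} (hρ : Separable ρ) :
    cSq ρ ≤ 1 := by
  have h_bloch : ∀ τ, IsDensity τ → ∑ i, expVal τ (pauli i) ^ 2 ≤ 1 :=
    fun _ hτ => hτ.sum_sq_expVal_pauli_le_one
  calc
    cSq ρ = ∑ p : Fin 3 × Fin 3, expVal ρ (pauli p.1 ⊗ₖ pauli p.2) ^ 2 := cSq_eq_sum_sq_expVal ρ
    _ ≤ 1 * 1 := hρ.sum_sq_expVal_kronecker_le isHermitian_pauli h_bloch h_bloch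
    _ = 1 := one_mul 1

/-- Any separable two-qubit state has `c² ≤ 1`; hence any two-qubit density matrix
whose correlation component has squared length greater than 1 is entangled. -/
theorem stmt15 (ρ : Matrix (Fin 2 × Fin 2) (Fin 2 × Fin 2) ℂ) (hρ : IsDensity ρ) :
    (Separable ρ → cSq ρ ≤ 1) ∧ (1 < cSq ρ → ¬ Separable ρ) :=
  ⟨Separable.cSq_le_one, fun h hs => h.not_ge hs.cSq_le_one⟩
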